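/- Let S = ℂ[x₁,…,xₙ] and let g₁,…,gₛ ∈ S be homogeneous polynomials of positive degree forming a regular sequence, and let R = ℂ[g₁,…,gₛ] ⊆ S be the subalgebra they generate. Then S is a free (in particular flat) R-module. -/

import Mathlib

open MvPolynomial
open scoped Pointwise

theorem aux_pow_indep {k M K : Type*} [Field k] [AddCommGroup M] [Module k M]
    (x : M →ₗ[k] M) (hx : Function.Injective x) (w : K → M)
    (hw : ∀ c : K →₀ k, Finsupp.linearCombination k w c ∈ LinearMap.range x → c = 0) :
    LinearIndependent k (fun p : ℕ × K => (x ^ p.1) (w p.2)) := by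
  have key : ∀ (n : ℕ) (f : ℕ → (K →₀ k)),
      ∑ i ∈ Finset.range n, (x ^ i) (Finsupp.linearCombination k w (f i)) = 0 →
      ∀ i < n, f i = 0 := by
    intro n
    induction n with
    | zero => intro f _ i hi; omega
    | succ n ih =>
      intro f hf
      rw [Finset.sum_range_succ'] at hf
      have e : ∑ i ∈ Finset.range n, (x ^ (i+1)) (Finsupp.linearCombination k w (f (i+1)))
          = x (∑ i ∈ Finset.range n, (x ^ i) (Finsupp.linearCombination k w (f (i+1)))) := by
        rw [map_sum]
        refine Finset.sum_congr rfl fun i _ => ?_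
        rw [pow_succ', Module.End.mul_apply]
      rw [e] at hf
      simp only [pow_zero, Module.End.one_apply] at hf
      have h0 : f 0 = 0 := by
        apply hw
        rw [eq_neg_of_add_eq_zero_right hf]
        exact neg_mem ⟨_, rfl⟩
      rw [h0, map_zero, add_zero] at hf
      have h1 := ih (fun i => f (i+1)) (hx (by rw [hf, map_zero]))
      intro i hi
      cases i with
      | zero => exact h0
      | succ i => exact h1 i (by omega)
  rw [linearIndependent_iff]
  intro l hl
  have h2 : ∃ n, ∀ i ∈ l.curry.support, i < n :=
    ⟨l.curry.support.sup id + 1, fun i hi =>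
      Nat.lt_succ_of_le (Finset.le_sup (f := id) hi)⟩
  obtain ⟨n, hn⟩ := h2
  have h3 : ∑ i ∈ Finset.range n, (x ^ i) (Finsupp.linearCombination k w (l.curry i)) = 0 := by
    rw [← hl]
    have : Finsupp.linearCombination k (fun p : ℕ × K => (x ^ p.1) (w p.2)) l
        = l.curry.sum fun i c => (x ^ i) (Finsupp.linearCombination k w c) := by
      simp only [Finsupp.linearCombination_apply, Finsupp.sum, map_sum, map_smul]
      exact (Finsupp.sum_curry_index l (fun i j c => c • (x ^ i) (w j))).symm
    rw [this, Finsupp.sum]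
    symm
    apply Finset.sum_subset
    · intro i hi; simpa using hn i hi
    · intro i _ hi
      rw [Finsupp.notMem_support_iff.mp hi]; simp
  have h4 := key n _ h3
  ext ⟨i, j⟩
  rw [← Finsupp.curry_apply]
  by_cases hi : i < n
  · rw [h4 i hi]; rfl
  · have : i ∉ l.curry.support := fun h => hi (hn i h)
    rw [Finsupp.notMem_support_iff.mp this]; rfl

theorem aux_reg_indep {k A J : Type*} [Field k] [CommRing A] [Algebra k A] (s : ℕ) :
    ∀ {M : Type*} [AddCommGroup M] [Module k M] [Module A M] [IsScalarTower k A M]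
    (g : Fin s → A) (_ : RingTheory.Sequence.IsWeaklyRegular M (List.ofFn g)) (b : J → M)
    (_ : ∀ c : J →₀ k, Finsupp.linearCombination k b c ∈
      (Ideal.ofList (List.ofFn g) • ⊤ : Submodule A M) → c = 0),
    LinearIndependent k (fun p : (Fin s → ℕ) × J => (∏ i, g i ^ p.1 i) • b p.2) := by
  induction s with
  | zero =>
    intro M _ _ _ _ g hg b hb
    have h1 : LinearIndependent k b := by
      rw [linearIndependent_iff]
      intro l hl
      exact hb l (by rw [hl]; exact zero_mem _)
    have := h1.comp (fun p : (Fin 0 → ℕ) × J => p.2) (by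
      rintro ⟨a, j⟩ ⟨a', j'⟩ h
      exact Prod.ext (Subsingleton.elim _ _) h)
    simpa [Function.comp_def] using this
  | succ s ih =>
    intro M _ _ _ _ g hg b hb
    rw [List.ofFn_succ] at hg hb
    rw [RingTheory.Sequence.isWeaklyRegular_cons_iff] at hg
    obtain ⟨h0, hg⟩ := hg
    let N : Submodule A M := g 0 • ⊤
    have hI := ih (M := QuotSMulTop (g 0) M) (fun i => g i.succ) hg
      (fun j => N.mkQ (b j)) (by
        intro c hc
        apply hb
        have e : Finsupp.linearCombination k (fun j => N.mkQ (b j)) c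
            = N.mkQ (Finsupp.linearCombination k b c) := by
          simp only [Finsupp.linearCombination_apply, Finsupp.sum, map_sum]
          rfl
        have hc' : N.mkQ (Finsupp.linearCombination k b c) ∈
            (Ideal.ofList (List.ofFn fun i => g i.succ) • ⊤ : Submodule A (M ⧸ N)) := by
          rw [← e]; exact hc
        rw [Ideal.ofList_cons_smul]
        have e2 : (⊤ : Submodule A (M ⧸ N)) = Submodule.map N.mkQ ⊤ := by
          rw [Submodule.map_top, Submodule.range_mkQ]
        rw [e2, ← Submodule.map_smul'', ← Submodule.mem_comap, Submodule.comap_map_mkQ] at hc'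
        exact hc')
    let x : M →ₗ[k] M := Algebra.lsmul k k M (g 0)
    have h5 := aux_pow_indep x h0
      (fun p : (Fin s → ℕ) × J => (∏ i, g i.succ ^ p.1 i) • b p.2) (by
        intro c hc
        rw [linearIndependent_iff] at hI
        apply hI
        have e : Finsupp.linearCombination k
              (fun p : (Fin s → ℕ) × J => (∏ i, g i.succ ^ p.1 i) • N.mkQ (b p.2)) c
            = N.mkQ (Finsupp.linearCombination k
              (fun p : (Fin s → ℕ) × J => (∏ i, g i.succ ^ p.1 i) • b p.2) c) := by
          simp only [Finsupp.linearCombination_apply, Finsupp.sum, map_sum]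
          rfl
        refine e.trans ?_
        obtain ⟨y, hy⟩ := hc
        rw [← hy]
        rw [Submodule.mkQ_apply, Submodule.Quotient.mk_eq_zero]
        exact Submodule.smul_mem_pointwise_smul y (g 0) ⊤ trivial)
    have h6 := h5.comp (fun p : (Fin (s+1) → ℕ) × J => (p.1 0, ((fun i => p.1 i.succ), p.2))) (by
      rintro ⟨a, j⟩ ⟨a', j'⟩ h
      simp only [Prod.mk.injEq] at h
      obtain ⟨h1, h2, h3⟩ := h
      refine Prod.ext (funext fun i => ?_) h3
      refine Fin.cases h1 (fun i => congrFun h2 i) i)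
    convert h6 using 1
    funext p
    simp only [Function.comp_apply, x, ← map_pow]
    rw [Fin.prod_univ_succ, mul_smul]
    rfl

theorem aux_hc_mul {σ k : Type*} [Field k] (g h : MvPolynomial σ k) (d m : ℕ)
    (hg : g.IsHomogeneous d) :
    homogeneousComponent m (g * h) =
      if d ≤ m then g * homogeneousComponent (m - d) h else 0 := by
  have e : g * h = ∑ i ∈ Finset.range (h.totalDegree + 1), g * homogeneousComponent i h := by
    rw [← Finset.mul_sum, sum_homogeneousComponent]
  have h2 : ∀ i, homogeneousComponent m (g * homogeneousComponent i h)
      = if d + i = m then g * homogeneousComponent i h else 0 := by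
    intro i
    have := hg.mul (homogeneousComponent_isHomogeneous i h)
    rw [homogeneousComponent_of_mem this]
    simp [eq_comm]
  rw [e, map_sum]
  simp only [h2]
  split_ifs with hm
  · rw [Finset.sum_eq_single (m - d)]
    · rw [if_pos (by omega)]
    · intro i _ hi
      rw [if_neg (by omega)]
    · intro hi
      rw [homogeneousComponent_eq_zero]
      · simp
      · simp only [Finset.mem_range] at hi; omega
  · exact Finset.sum_eq_zero fun i _ => if_neg (by omega)

/-- If `g₁,…,gₛ` are homogeneous polynomials of positive degree in
`S = ℂ[x₁,…,xₙ]` forming a regular sequence, then `S` is a free (in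
particular, flat) module over the subalgebra `R = ℂ[g₁,…,gₛ]` that they
generate. -/
theorem stmt_11 (n s : ℕ) (g : Fin s → MvPolynomial (Fin n) ℂ)
    (d : Fin s → ℕ) (hd : ∀ i, 0 < d i)
    (hhom : ∀ i, (g i).IsHomogeneous (d i))
    (hreg : RingTheory.Sequence.IsRegular (MvPolynomial (Fin n) ℂ) (List.ofFn g)) :
    Module.Free (Algebra.adjoin ℂ (Set.range g)) (MvPolynomial (Fin n) ℂ) ∧
    Module.Flat (Algebra.adjoin ℂ (Set.range g)) (MvPolynomial (Fin n) ℂ) := by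
  suffices h : Module.Free (Algebra.adjoin ℂ (Set.range g)) (MvPolynomial (Fin n) ℂ) from
    ⟨h, inferInstance⟩
  let I : Ideal (MvPolynomial (Fin n) ℂ) := Ideal.span (Set.range g)
  have hI : Ideal.ofList (List.ofFn g) = I := by
    simp only [Ideal.ofList, I]
    congr 1
    ext x
    simp [List.mem_ofFn]
  let q : MvPolynomial (Fin n) ℂ →ₗ[ℂ] (MvPolynomial (Fin n) ℂ ⧸ I) :=
    (Ideal.Quotient.mkₐ ℂ I).toLinearMap
  have hq : ∀ f, q f = 0 ↔ f ∈ I := fun f => Ideal.Quotient.eq_zero_iff_mem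
  obtain ⟨J, a, -, hspan, hli⟩ := exists_linearIndependent' ℂ
    (fun α : Fin n →₀ ℕ => q (monomial α (1:ℂ)))
  let b : J → MvPolynomial (Fin n) ℂ := fun j => monomial (a j) 1
  have hqb : ∀ c : J →₀ ℂ, q (Finsupp.linearCombination ℂ b c) =
      Finsupp.linearCombination ℂ
        ((fun α : Fin n →₀ ℕ => q (monomial α (1:ℂ))) ∘ a) c := by
    intro c
    simp only [Finsupp.linearCombination_apply, Finsupp.sum, map_sum, map_smul]
    rfl
  have hind := aux_reg_indep (k := ℂ) s g hreg.toIsWeaklyRegular b (by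
    intro c hc
    rw [hI, smul_eq_mul, Ideal.mul_top, ← hq, hqb] at hc
    exact linearIndependent_iff.mp hli c hc)
  have hrange : Algebra.adjoin ℂ (Set.range g) = (aeval (R := ℂ) g).range :=
    Algebra.adjoin_range_eq_range_aeval ℂ g
  -- linear independence over the subalgebra
  have hLI : LinearIndependent (Algebra.adjoin ℂ (Set.range g)) b := by
    classical
    rw [linearIndependent_iff']
    intro t l hl
    have hL : ∀ j, ∃ G : MvPolynomial (Fin s) ℂ, aeval g G = (l j : MvPolynomial (Fin n) ℂ) := by
      intro j
      exact hrange.le (l j).2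
    choose L hL using hL
    have hind' := hind.comp (fun p : (Fin s →₀ ℕ) × J => ((p.1 : Fin s → ℕ), p.2)) (by
      rintro ⟨a, j⟩ ⟨a', j'⟩ h
      simp only [Prod.mk.injEq] at h
      exact Prod.ext (DFunLike.coe_injective h.1) h.2)
    rw [linearIndependent_iff'] at hind'
    let T := t.biUnion fun j => (L j).support
    have h1 := hind' (T ×ˢ t) (fun p => coeff p.1 (L p.2)) (by
      rw [Finset.sum_product_right, ← hl]
      refine Finset.sum_congr rfl fun j hj => ?_
      rw [Algebra.smul_def]
      change _ = (l j : MvPolynomial (Fin n) ℂ) * b j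
      rw [← hL j, aeval_def, eval₂_eq', Finset.sum_mul]
      symm
      rw [Finset.sum_subset (Finset.subset_biUnion_of_mem (fun j => (L j).support) hj)]
      · refine Finset.sum_congr rfl fun α _ => ?_
        simp only [Function.comp_apply, Algebra.smul_def]
        rw [mul_assoc]
        rfl
      · intro α _ hα
        rw [notMem_support_iff.mp hα]; simp)
    intro j hj
    have h2 : L j = 0 := by
      ext α
      by_cases hα : α ∈ (L j).support
      · exact h1 (α, j) (Finset.mem_product.mpr
          ⟨Finset.mem_biUnion.mpr ⟨j, hj, hα⟩, hj⟩)
      · rw [notMem_support_iff.mp hα]; simp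
    apply Subtype.ext
    rw [← hL j, h2]; simp
  -- spanning
  let N := Submodule.span (Algebra.adjoin ℂ (Set.range g)) (Set.range b)
  have hNsmul : ∀ (c : ℂ) f, f ∈ N → c • f ∈ N := by
    intro c f hf
    have := N.smul_mem (algebraMap ℂ (Algebra.adjoin ℂ (Set.range g)) c) hf
    rwa [algebraMap_smul] at this
  have hNg : ∀ i f, f ∈ N → g i * f ∈ N := by
    intro i f hf
    exact N.smul_mem ⟨g i, Algebra.subset_adjoin ⟨i, rfl⟩⟩ hf
  have hdecomp : ∀ f, ∃ c : J →₀ ℂ, f - Finsupp.linearCombination ℂ b c ∈ I := by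
    intro f
    have h1 : q f ∈ Submodule.span ℂ
        (Set.range ((fun α : Fin n →₀ ℕ => q (monomial α (1:ℂ))) ∘ a)) := by
      rw [hspan]
      have e : f = ∑ α ∈ f.support, coeff α f • monomial α (1:ℂ) := by
        conv_lhs => rw [f.as_sum]
        refine Finset.sum_congr rfl fun α _ => ?_
        rw [smul_monomial, smul_eq_mul, mul_one]
      rw [e, map_sum]
      refine Submodule.sum_mem _ fun α _ => ?_
      rw [map_smul]
      exact Submodule.smul_mem _ _ (Submodule.subset_span ⟨α, rfl⟩)
    rw [Finsupp.mem_span_range_iff_exists_finsupp] at h1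
    obtain ⟨c, hc⟩ := h1
    refine ⟨c, ?_⟩
    rw [← hq, map_sub, hqb, Finsupp.linearCombination_apply, hc, sub_self]
  have hcomp : ∀ m f, homogeneousComponent m f ∈ N := by
    intro m
    induction m using Nat.strong_induction_on with
    | _ m ih =>
    intro f
    obtain ⟨c, hc⟩ := hdecomp f
    rw [Ideal.mem_span_range_iff_exists_fun] at hc
    obtain ⟨h, hh⟩ := hc
    have e : f = ∑ i, g i * h i + Finsupp.linearCombination ℂ b c := by
      rw [← sub_eq_iff_eq_add, ← hh]
      exact Finset.sum_congr rfl fun i _ => mul_comm _ _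
    rw [e, map_add, map_sum, Finsupp.linearCombination_apply, Finsupp.sum, map_sum]
    refine add_mem (Submodule.sum_mem _ fun i _ => ?_) (Submodule.sum_mem _ fun j _ => ?_)
    · rw [aux_hc_mul _ _ _ _ (hhom i)]
      split_ifs with hm
      · exact hNg i _ (ih _ (by have := hd i; omega) _)
      · exact zero_mem _
    · rw [map_smul]
      apply hNsmul
      rw [homogeneousComponent_of_mem (isHomogeneous_monomial (n := (a j).degree) 1 rfl)]
      split_ifs
      · exact Submodule.subset_span ⟨j, rfl⟩
      · exact zero_mem _
  have hN : ⊤ ≤ N := by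
    intro f _
    rw [← sum_homogeneousComponent f]
    exact Submodule.sum_mem _ fun i _ => hcomp i f
  exact Module.Free.of_basis (Module.Basis.mk hLI hN)
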